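/- Let f : ℝ³ → ℝ be continuously differentiable with ∫_{S²} f dσ = 0, where S² is the unit sphere in ℝ³. Define the tangential gradient ∇_{S²}f(u) = ∇f(u) − ⟨∇f(u), u⟩·u for u ∈ S². Then ∫_{S²} (‖∇_{S²}f(u)‖² − 2·f(u)²) dσ(u) ≥ 4·inf_{a ∈ ℝ³} ∫_{S²} (f(u) − ⟨a, u⟩)² dσ(u). -/

import Mathlib

open MeasureTheory Metric Filter
open scoped RealInnerProductSpace

noncomputable section

/-- Three-dimensional Euclidean space. -/
abbrev Space3 := EuclideanSpace ℝ (Fin 3)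

/-- The surface measure of the unit sphere, as a measure on the ambient space. -/
def sphereMeasure : Measure Space3 := μH[2].restrict (sphere 0 1)

theorem hausdorffMeasure_sphere_lt_top : μH[2] (sphere (0 : Space3) 1) < ⊤ := by
  let Ψ : ℝ × ℝ → Space3 := fun p =>
    !₂[Real.cos p.1 * Real.cos p.2, Real.cos p.1 * Real.sin p.2, Real.sin p.1]
  have hΨ : ContDiff ℝ 1 Ψ := by
    rw [contDiff_piLp]
    intro i
    fin_cases i
    · exact (Real.contDiff_cos.comp contDiff_fst).mul (Real.contDiff_cos.comp contDiff_snd)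
    · exact (Real.contDiff_cos.comp contDiff_fst).mul (Real.contDiff_sin.comp contDiff_snd)
    · exact Real.contDiff_sin.comp contDiff_fst
  let K : Set (ℝ × ℝ) := Set.Icc (-Real.pi) Real.pi ×ˢ Set.Icc (-Real.pi) Real.pi
  have hK : IsCompact K := isCompact_Icc.prod isCompact_Icc
  obtain ⟨C, hC⟩ := hK.exists_bound_of_continuousOn (hΨ.continuous_fderiv one_ne_zero).continuousOn
  have hLip : LipschitzOnWith C.toNNReal Ψ K :=
    Convex.lipschitzOnWith_of_nnnorm_fderiv_le (𝕜 := ℝ)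
      (fun x _ => (hΨ.differentiable one_ne_zero) x)
      (fun x hx => by
        rw [← NNReal.coe_le_coe, coe_nnnorm]
        exact (hC x hx).trans (Real.le_coe_toNNReal C))
      ((convex_Icc _ _).prod (convex_Icc _ _))
  have hsub : sphere (0 : Space3) 1 ⊆ Ψ '' K := by
    intro u hu
    have hu' : u 0 ^ 2 + u 1 ^ 2 + u 2 ^ 2 = 1 := by
      have := EuclideanSpace.real_norm_sq_eq u
      rw [mem_sphere_zero_iff_norm.1 hu, Fin.sum_univ_three] at this
      linarith
    have h2 : -1 ≤ u 2 ∧ u 2 ≤ 1 := abs_le.1 (abs_le_one_iff_mul_self_le_one.2 (by nlinarith))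
    have hz : Real.cos (Real.arcsin (u 2)) = ‖(⟨u 0, u 1⟩ : ℂ)‖ := by
      rw [Real.cos_arcsin, Complex.norm_def, Complex.normSq_mk]
      congr 1
      linarith
    refine ⟨(Real.arcsin (u 2), Complex.arg ⟨u 0, u 1⟩), ⟨⟨?_, ?_⟩, ⟨?_, ?_⟩⟩, ?_⟩
    · exact le_trans (by linarith [Real.pi_pos]) (Real.neg_pi_div_two_le_arcsin _)
    · exact (Real.arcsin_le_pi_div_two _).trans (by linarith [Real.pi_pos])
    · exact (Complex.neg_pi_lt_arg _).le
    · exact Complex.arg_le_pi _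
    · ext i
      fin_cases i
      · simp [Ψ, hz]
      · simp [Ψ, hz]
      · simpa [Ψ] using Real.sin_arcsin h2.1 h2.2
  refine (measure_mono hsub).trans_lt ((hLip.hausdorffMeasure_image_le zero_le_two).trans_lt ?_)
  rw [hausdorffMeasure_prod_real]
  exact ENNReal.mul_lt_top (by simp) hK.measure_lt_top

instance isFiniteMeasure_sphereMeasure : IsFiniteMeasure sphereMeasure :=
  ⟨by simpa [sphereMeasure] using hausdorffMeasure_sphere_lt_top⟩

theorem ae_mem_sphere : ∀ᵐ u ∂sphereMeasure, u ∈ sphere (0 : Space3) 1 :=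
  ae_restrict_mem isClosed_sphere.measurableSet

theorem memLp_sphereMeasure {p : ENNReal} {g : Space3 → ℝ} (hg : Continuous g) :
    MemLp g p sphereMeasure := by
  obtain ⟨C, hC⟩ := (isCompact_sphere (0 : Space3) 1).exists_bound_of_continuousOn hg.continuousOn
  exact MemLp.of_bound hg.aestronglyMeasurable C (ae_mem_sphere.mono hC)

theorem integrable_sphereMeasure {g : Space3 → ℝ} (hg : Continuous g) :
    Integrable g sphereMeasure :=
  memLp_one_iff_integrable.1 (memLp_sphereMeasure hg)

/-- The infinitesimal rotation around the `k`-th coordinate axis. -/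
def axisField (k : Fin 3) : Space3 →L[ℝ] Space3 :=
  (EuclideanSpace.proj (k + 1)).smulRight (EuclideanSpace.single (k + 2) 1) -
    (EuclideanSpace.proj (k + 2)).smulRight (EuclideanSpace.single (k + 1) 1)

theorem axisField_apply (k : Fin 3) (u : Space3) :
    axisField k u = u (k + 1) • EuclideanSpace.single (k + 2) 1 -
      u (k + 2) • EuclideanSpace.single (k + 1) 1 := rfl

theorem axisField_axisField_axisField (k : Fin 3) (u : Space3) :
    axisField k (axisField k (axisField k u)) = -axisField k u := by
  ext i
  fin_cases k <;> fin_cases i <;> simp [axisField_apply]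

/-- The rotation by the angle `t` around the `k`-th coordinate axis, by Rodrigues' formula. -/
def axisRotation (k : Fin 3) (t : ℝ) : Space3 ≃ₗᵢ[ℝ] Space3 :=
  LinearIsometry.toLinearIsometryEquiv
    { toLinearMap := (ContinuousLinearMap.id ℝ Space3 + Real.sin t • axisField k +
        (1 - Real.cos t) • (axisField k).comp (axisField k) : Space3 →L[ℝ] Space3)
      norm_map' := fun u => by
        rw [← sq_eq_sq₀ (norm_nonneg _) (norm_nonneg _), EuclideanSpace.real_norm_sq_eq,
          EuclideanSpace.real_norm_sq_eq, Fin.sum_univ_three, Fin.sum_univ_three]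
        have := Real.sin_sq_add_cos_sq t
        fin_cases k <;> simp [axisField_apply] <;> grind } rfl

theorem axisRotation_apply (k : Fin 3) (t : ℝ) (u : Space3) :
    axisRotation k t u =
      u + Real.sin t • axisField k u + (1 - Real.cos t) • axisField k (axisField k u) := rfl

theorem hasDerivAt_axisRotation (k : Fin 3) (t : ℝ) (u : Space3) :
    HasDerivAt (fun s => axisRotation k s u) (axisField k (axisRotation k t u)) t := by
  refine ((((Real.hasDerivAt_sin t).smul_const (axisField k u)).const_add u).add
    (((Real.hasDerivAt_cos t).const_sub 1).smul_const (axisField k (axisField k u)))).congr_deriv ?_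
  simp only [axisRotation_apply, map_add, map_smul, axisField_axisField_axisField]
  module

theorem axisRotation_mem_sphere (k : Fin 3) (t : ℝ) {u : Space3} (hu : u ∈ sphere (0 : Space3) 1) :
    axisRotation k t u ∈ sphere (0 : Space3) 1 := by
  simpa using hu

theorem integral_comp_axisRotation (k : Fin 3) (t : ℝ) (g : Space3 → ℝ) :
    ∫ u, g (axisRotation k t u) ∂sphereMeasure = ∫ u, g u ∂sphereMeasure := by
  have h := ((axisRotation k t).toIsometryEquiv.measurePreserving_hausdorffMeasure
    2).setIntegral_preimage_emb (axisRotation k t).toHomeomorph.measurableEmbedding g (sphere 0 1)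
  have hpre : (axisRotation k t).toIsometryEquiv ⁻¹' sphere (0 : Space3) 1 = sphere 0 1 := by
    ext u
    simp
  rw [hpre] at h
  exact h

/-- The derivative of `f` along the infinitesimal rotation around the `k`-th axis. -/
def axisDeriv (k : Fin 3) (f : Space3 → ℝ) (u : Space3) : ℝ := fderiv ℝ f u (axisField k u)

theorem continuous_axisDeriv (k : Fin 3) {f : Space3 → ℝ} (hf : ContDiff ℝ 1 f) :
    Continuous (axisDeriv k f) :=
  (hf.continuous_fderiv one_ne_zero).clm_apply (axisField k).continuous

theorem integral_axisDeriv (k : Fin 3) {g : Space3 → ℝ} (hg : ContDiff ℝ 1 g) :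
    ∫ u, axisDeriv k g u ∂sphereMeasure = 0 := by
  obtain ⟨C, hC⟩ := (isCompact_sphere (0 : Space3) 1).exists_bound_of_continuousOn
    (continuous_axisDeriv k hg).continuousOn
  have hrot (t : ℝ) : Continuous (axisRotation k t) := (axisRotation k t).continuous
  have h := (hasDerivAt_integral_of_dominated_loc_of_deriv_le (μ := sphereMeasure)
    (F := fun t u => g (axisRotation k t u))
    (F' := fun t u => axisDeriv k g (axisRotation k t u)) (bound := fun _ => C) (x₀ := (0 : ℝ))
    univ_mem
    (Eventually.of_forall fun t => (hg.continuous.comp (hrot t)).aestronglyMeasurable)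
    (integrable_sphereMeasure (hg.continuous.comp (hrot 0)))
    ((continuous_axisDeriv k hg).comp (hrot 0)).aestronglyMeasurable
    (ae_mem_sphere.mono fun u hu t _ => hC _ (axisRotation_mem_sphere k t hu))
    (integrable_const C)
    (Eventually.of_forall fun u t _ =>
      (hg.differentiable one_ne_zero _).hasFDerivAt.comp_hasDerivAt t
        (hasDerivAt_axisRotation k t u))).2
  simp only [integral_comp_axisRotation] at h
  exact h.unique (hasDerivAt_const _ _)

theorem norm_sq_tangential_gradient {f : Space3 → ℝ} {u : Space3}
    (hu : u ∈ sphere (0 : Space3) 1) :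
    ‖gradient f u - ⟪gradient f u, u⟫ • u‖ ^ 2 = ∑ k, axisDeriv k f u ^ 2 := by
  have hu' := EuclideanSpace.real_norm_sq_eq u
  rw [mem_sphere_zero_iff_norm.1 hu, Fin.sum_univ_three] at hu'
  simp only [axisDeriv, ← inner_gradient_left]
  generalize gradient f u = v
  simp only [axisField_apply, inner_sub_right, real_inner_smul_right,
    EuclideanSpace.inner_single_right]
  rw [EuclideanSpace.real_norm_sq_eq]
  simp [Fin.sum_univ_three, PiLp.inner_apply]
  grind

open MvPolynomial in
/-- Polynomials in three variables as continuous functions on space. -/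
def polyFun : MvPolynomial (Fin 3) ℝ →ₐ[ℝ] C(Space3, ℝ) :=
  aeval fun i => ⟨fun u => u i, by fun_prop⟩

@[simp]
theorem polyFun_X (i : Fin 3) (u : Space3) : polyFun (MvPolynomial.X i) u = u i := by
  simp [polyFun]

@[simp]
theorem polyFun_C (c : ℝ) (u : Space3) : polyFun (MvPolynomial.C c) u = c := by
  simp [polyFun]

theorem contDiff_polyFun (P : MvPolynomial (Fin 3) ℝ) : ContDiff ℝ 1 (polyFun P) := by
  induction P using MvPolynomial.induction_on with
  | C c => exact (funext fun u => polyFun_C c u : ⇑(polyFun (MvPolynomial.C c)) = _) ▸ contDiff_const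
  | add p q hp hq =>
    rw [map_add, ContinuousMap.coe_add]
    exact hp.add hq
  | mul_X p i hp =>
    have hX : ⇑(polyFun (MvPolynomial.X i)) = ⇑(EuclideanSpace.proj i : Space3 →L[ℝ] ℝ) :=
      funext fun u => polyFun_X i u
    rw [map_mul, ContinuousMap.coe_mul, hX]
    exact hp.mul (ContinuousLinearMap.contDiff _)

theorem axisDeriv_add (k : Fin 3) {f g : Space3 → ℝ} (hf : ContDiff ℝ 1 f)
    (hg : ContDiff ℝ 1 g) : axisDeriv k (f + g) = axisDeriv k f + axisDeriv k g := by
  ext u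
  simp [axisDeriv, fderiv_add (hf.differentiable one_ne_zero u) (hg.differentiable one_ne_zero u)]

theorem axisDeriv_mul (k : Fin 3) {f g : Space3 → ℝ} (hf : ContDiff ℝ 1 f)
    (hg : ContDiff ℝ 1 g) :
    axisDeriv k (f * g) = f * axisDeriv k g + g * axisDeriv k f := by
  ext u
  simp [axisDeriv, fderiv_mul (hf.differentiable one_ne_zero u) (hg.differentiable one_ne_zero u)]

open MvPolynomial in
/-- The infinitesimal rotation around the `k`-th axis as a derivation of polynomials. -/
def axisPDeriv (k : Fin 3) :
    Derivation ℝ (MvPolynomial (Fin 3) ℝ) (MvPolynomial (Fin 3) ℝ) :=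
  (X (k + 1) : MvPolynomial (Fin 3) ℝ) • pderiv (k + 2) -
    (X (k + 2) : MvPolynomial (Fin 3) ℝ) • pderiv (k + 1)

theorem axisDeriv_polyFun (k : Fin 3) (P : MvPolynomial (Fin 3) ℝ) :
    axisDeriv k (polyFun P) = polyFun (axisPDeriv k P) := by
  induction P using MvPolynomial.induction_on with
  | C c =>
    have h : ⇑(polyFun (MvPolynomial.C c)) = fun _ => c := funext fun u => polyFun_C c u
    ext u
    rw [axisDeriv, h]
    simp [axisPDeriv]
  | add p q hp hq =>
    rw [map_add, ContinuousMap.coe_add, axisDeriv_add k (contDiff_polyFun p) (contDiff_polyFun q),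
      hp, hq, map_add, map_add, ContinuousMap.coe_add]
  | mul_X p i hp =>
    have hX : axisDeriv k (polyFun (MvPolynomial.X i)) =
        polyFun (axisPDeriv k (MvPolynomial.X i)) := by
      have h : ⇑(polyFun (MvPolynomial.X i)) = ⇑(EuclideanSpace.proj i : Space3 →L[ℝ] ℝ) :=
        funext fun u => polyFun_X i u
      ext u
      rw [axisDeriv, h, ContinuousLinearMap.fderiv]
      fin_cases k <;> fin_cases i <;> simp [axisPDeriv, axisField_apply]
    rw [map_mul, ContinuousMap.coe_mul, axisDeriv_mul k (contDiff_polyFun p) (contDiff_polyFun _),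
      hp, hX, Derivation.leibniz, map_add, smul_eq_mul, smul_eq_mul, map_mul, map_mul]
    rfl

/-- The Laplace-Beltrami operator of the sphere, acting on polynomials. -/
def sphereLaplacian : MvPolynomial (Fin 3) ℝ →ₗ[ℝ] MvPolynomial (Fin 3) ℝ :=
  ∑ k, (axisPDeriv k : MvPolynomial (Fin 3) ℝ →ₗ[ℝ] MvPolynomial (Fin 3) ℝ) ∘ₗ
    (axisPDeriv k : MvPolynomial (Fin 3) ℝ →ₗ[ℝ] MvPolynomial (Fin 3) ℝ)

theorem sphereLaplacian_apply (P : MvPolynomial (Fin 3) ℝ) :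
    sphereLaplacian P = ∑ k, axisPDeriv k (axisPDeriv k P) := by
  simp [sphereLaplacian]

namespace MvPolynomial

theorem pderiv_pderiv_comm {σ R : Type*} [CommRing R] (i j : σ) (P : MvPolynomial σ R) :
    pderiv i (pderiv j P) = pderiv j (pderiv i P) := by
  classical
  induction P using MvPolynomial.induction_on with
  | C c => simp
  | add p q hp hq => simp [hp, hq]
  | mul_X p k hp =>
    simp only [Derivation.leibniz, map_add, smul_eq_mul, pderiv_X, Pi.single_apply, hp]
    split_ifs <;> simp <;> ring

end MvPolynomial

open MvPolynomial in
theorem sphereLaplacian_eq (P : MvPolynomial (Fin 3) ℝ) :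
    sphereLaplacian P = (∑ i, X i ^ 2) * ∑ i, pderiv i (pderiv i P) -
      ∑ i, X i * pderiv i (∑ j, X j * pderiv j P) - ∑ i, X i * pderiv i P := by
  have h01 := pderiv_pderiv_comm 1 0 P
  have h02 := pderiv_pderiv_comm 2 0 P
  have h12 := pderiv_pderiv_comm 2 1 P
  simp [sphereLaplacian_apply, axisPDeriv, Fin.sum_univ_three, Derivation.leibniz, pderiv_X,
    h01, h02, h12]
  ring

open MvPolynomial in
theorem sphereLaplacian_of_isHomogeneous {P : MvPolynomial (Fin 3) ℝ} {n : ℕ}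
    (hP : P.IsHomogeneous n) :
    sphereLaplacian P = (∑ i, X i ^ 2) * ∑ i, pderiv i (pderiv i P) - C ((n * (n + 1) : ℝ)) * P := by
  rw [sphereLaplacian_eq, hP.sum_X_mul_pderiv]
  have hnP : (n • P).IsHomogeneous n := (homogeneousSubmodule (Fin 3) ℝ n).nsmul_mem hP n
  rw [hnP.sum_X_mul_pderiv]
  simp only [nsmul_eq_mul, map_mul, map_add, map_natCast, map_one]
  ring

theorem polyFun_sum_X_sq {u : Space3} (hu : u ∈ sphere (0 : Space3) 1) :
    polyFun (∑ i, MvPolynomial.X i ^ 2) u = 1 := by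
  have h := EuclideanSpace.real_norm_sq_eq u
  rw [mem_sphere_zero_iff_norm.1 hu, one_pow] at h
  simp [h]

open MvPolynomial in
theorem exists_polyFun_sphereLaplacian_eq {P : MvPolynomial (Fin 3) ℝ} {n : ℕ}
    (hP : P.totalDegree ≤ n) :
    ∃ Q : MvPolynomial (Fin 3) ℝ, Q.totalDegree ≤ n - 1 ∧ ∀ u ∈ sphere (0 : Space3) 1,
      polyFun (sphereLaplacian P) u = polyFun (Q - C ((n * (n + 1) : ℝ)) * P) u := by
  have hsum : ∑ k ∈ Finset.range (n + 1), homogeneousComponent k P = P := by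
    conv_rhs => rw [← sum_homogeneousComponent P]
    refine (Finset.sum_subset (Finset.range_mono (by omega)) fun k _ hk => ?_).symm
    exact homogeneousComponent_eq_zero k P (by simpa using hk)
  refine ⟨∑ k ∈ Finset.range (n + 1), (∑ i, pderiv i (pderiv i (homogeneousComponent k P)) +
    C ((n * (n + 1) : ℝ) - (k * (k + 1) : ℝ)) * homogeneousComponent k P), ?_, fun u hu => ?_⟩
  · refine totalDegree_finsetSum_le fun k hk => ?_
    have hk' : k ≤ n := by simpa [Nat.lt_succ_iff] using hk
    have hhom := homogeneousComponent_isHomogeneous k P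
    refine (totalDegree_add _ _).trans (max_le (totalDegree_finsetSum_le fun i _ => ?_) ?_)
    · exact hhom.pderiv.pderiv.totalDegree_le.trans (by omega)
    · rcases hk'.eq_or_lt with rfl | hlt
      · simp
      · refine (totalDegree_mul _ _).trans ?_
        rw [totalDegree_C, zero_add]
        exact hhom.totalDegree_le.trans (by omega)
  · conv_lhs => rw [← hsum]
    conv_rhs => enter [1, 2, 2]; rw [← hsum]
    rw [map_sum, map_sum, Finset.mul_sum, ← Finset.sum_sub_distrib, map_sum,
      ContinuousMap.sum_apply, ContinuousMap.sum_apply]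
    refine Finset.sum_congr rfl fun k _ => ?_
    rw [sphereLaplacian_of_isHomogeneous (homogeneousComponent_isHomogeneous k P), map_sub,
      map_mul, ContinuousMap.sub_apply, ContinuousMap.mul_apply, polyFun_sum_X_sq hu, one_mul,
      ← ContinuousMap.sub_apply, ← map_sub]
    congr 2
    rw [map_sub C]
    ring

/-- Integration over the unit sphere, as a linear functional on continuous functions. -/
def sphereIntegral : C(Space3, ℝ) →ₗ[ℝ] ℝ where
  toFun g := ∫ u, g u ∂sphereMeasure
  map_add' g h := integral_add (integrable_sphereMeasure g.continuous)
    (integrable_sphereMeasure h.continuous)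
  map_smul' c g := integral_const_mul c g

theorem sphereIntegral_apply (g : C(Space3, ℝ)) :
    sphereIntegral g = ∫ u, g u ∂sphereMeasure := rfl

theorem sphereIntegral_congr {g h : C(Space3, ℝ)}
    (hgh : ∀ u ∈ sphere (0 : Space3) 1, g u = h u) : sphereIntegral g = sphereIntegral h :=
  integral_congr_ae (ae_mem_sphere.mono hgh)

theorem sphereIntegral_mono {g h : C(Space3, ℝ)}
    (hgh : ∀ u ∈ sphere (0 : Space3) 1, g u ≤ h u) : sphereIntegral g ≤ sphereIntegral h :=
  integral_mono_ae (integrable_sphereMeasure g.continuous) (integrable_sphereMeasure h.continuous)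
    (ae_mem_sphere.mono hgh)

theorem sphereIntegral_sq_nonneg (g : C(Space3, ℝ)) : 0 ≤ sphereIntegral (g ^ 2) :=
  integral_nonneg fun u => sq_nonneg (g u)

theorem sphereIntegral_mul_eq_zero {g : C(Space3, ℝ)} (hg : sphereIntegral (g ^ 2) = 0)
    (h : C(Space3, ℝ)) : sphereIntegral (g * h) = 0 := by
  have hae : (fun u => g u ^ 2) =ᵐ[sphereMeasure] 0 :=
    (integral_eq_zero_iff_of_nonneg (fun u => sq_nonneg (g u))
      (integrable_sphereMeasure (g.continuous.pow 2))).1 hg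
  refine integral_eq_zero_of_ae (hae.mono fun u hu => ?_)
  have : g u = 0 := by simpa using hu
  simp [this]

/-- The class in `L²` of the sphere of a continuous function. -/
def toSphereL2 : C(Space3, ℝ) →ₗ[ℝ] Lp ℝ 2 sphereMeasure where
  toFun g := (memLp_sphereMeasure g.continuous).toLp g
  map_add' _ _ := rfl
  map_smul' _ _ := rfl

theorem inner_toSphereL2 (g h : C(Space3, ℝ)) :
    ⟪toSphereL2 g, toSphereL2 h⟫ = sphereIntegral (g * h) := by
  rw [L2.inner_def]
  refine integral_congr_ae ?_
  filter_upwards [(memLp_sphereMeasure (p := 2) g.continuous).coeFn_toLp,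
    (memLp_sphereMeasure (p := 2) h.continuous).coeFn_toLp] with u hg hh
  have hg' : toSphereL2 g u = g u := hg
  have hh' : toSphereL2 h u = h u := hh
  simp [hg', hh', mul_comm]

theorem exists_sphereIntegral_projection (W : Submodule ℝ C(Space3, ℝ)) [FiniteDimensional ℝ W]
    (f : C(Space3, ℝ)) : ∃ q ∈ W, ∀ w ∈ W, sphereIntegral ((f - q) * w) = 0 := by
  obtain ⟨q, hq, hqf⟩ := (W.map toSphereL2).starProjection_apply_mem (toSphereL2 f)
  refine ⟨q, hq, fun w hw => ?_⟩
  rw [← inner_toSphereL2, map_sub, hqf]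
  exact Submodule.starProjection_inner_eq_zero _ _ (Submodule.mem_map_of_mem hw)

theorem exists_polyFun_projection (n : ℕ) (f : C(Space3, ℝ)) :
    ∃ q : MvPolynomial (Fin 3) ℝ, q.totalDegree ≤ n ∧
      ∀ w : MvPolynomial (Fin 3) ℝ, w.totalDegree ≤ n →
        sphereIntegral ((f - polyFun q) * polyFun w) = 0 := by
  obtain ⟨_, ⟨q, hq, rfl⟩, h⟩ := exists_sphereIntegral_projection
    ((MvPolynomial.restrictTotalDegree (Fin 3) ℝ n).map polyFun.toLinearMap) f
  exact ⟨q, (MvPolynomial.mem_restrictTotalDegree _ _ _).1 hq, fun w hw =>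
    h _ (Submodule.mem_map_of_mem ((MvPolynomial.mem_restrictTotalDegree _ _ _).2 hw))⟩

theorem exists_polyFun_near (f : C(Space3, ℝ)) {ε : ℝ} (hε : 0 < ε) :
    ∃ p : MvPolynomial (Fin 3) ℝ, ∀ u ∈ sphere (0 : Space3) 1, |polyFun p u - f u| < ε := by
  have hsep : polyFun.range.SeparatesPoints := by
    intro u v huv
    obtain ⟨i, hi⟩ : ∃ i, u i ≠ v i := by
      by_contra! h
      exact huv (PiLp.ext h)
    exact ⟨_, ⟨_, ⟨MvPolynomial.X i, rfl⟩, rfl⟩, by simpa using hi⟩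
  obtain ⟨_, ⟨p, rfl⟩, hp⟩ :=
    ContinuousMap.exists_mem_subalgebra_near_continuous_of_isCompact_of_separatesPoints hsep f
      (isCompact_sphere (0 : Space3) 1) hε
  exact ⟨p, hp⟩

/-- The angular derivative of a continuously differentiable function as a continuous function. -/
def axisDerivMap (k : Fin 3) (f : C(Space3, ℝ)) (hf : ContDiff ℝ 1 f) : C(Space3, ℝ) :=
  ⟨axisDeriv k f, continuous_axisDeriv k hf⟩

theorem sum_sphereIntegral_axisDerivMap_mul (f : C(Space3, ℝ)) (hf : ContDiff ℝ 1 f)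
    (P : MvPolynomial (Fin 3) ℝ) :
    ∑ k, sphereIntegral (axisDerivMap k f hf * polyFun (axisPDeriv k P)) =
      -sphereIntegral (f * polyFun (sphereLaplacian P)) := by
  rw [sphereLaplacian_apply, map_sum, Finset.mul_sum, map_sum, ← Finset.sum_neg_distrib]
  refine Finset.sum_congr rfl fun k _ => ?_
  rw [eq_neg_iff_add_eq_zero, ← map_add, sphereIntegral_apply,
    ← integral_axisDeriv k (hf.mul (contDiff_polyFun (axisPDeriv k P)))]
  congr 1
  ext u
  have h := congr_fun (axisDeriv_mul k hf (contDiff_polyFun (axisPDeriv k P))) u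
  rw [axisDeriv_polyFun] at h
  refine Eq.trans ?_ h.symm
  simp [axisDerivMap]
  ring

theorem sum_sphereIntegral_axisPDeriv_mul (P Q : MvPolynomial (Fin 3) ℝ) :
    ∑ k, sphereIntegral (polyFun (axisPDeriv k P * axisPDeriv k Q)) =
      -sphereIntegral (polyFun (P * sphereLaplacian Q)) := by
  rw [map_mul, ← sum_sphereIntegral_axisDerivMap_mul _ (contDiff_polyFun P)]
  refine Finset.sum_congr rfl fun k _ => ?_
  rw [map_mul]
  congr 2
  exact ContinuousMap.ext fun u => (congr_fun (axisDeriv_polyFun k P) u).symm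

theorem sphereIntegral_mul_sphereLaplacian_comm (P Q : MvPolynomial (Fin 3) ℝ) :
    sphereIntegral (polyFun (P * sphereLaplacian Q)) =
      sphereIntegral (polyFun (Q * sphereLaplacian P)) := by
  rw [← neg_inj, ← sum_sphereIntegral_axisPDeriv_mul, ← sum_sphereIntegral_axisPDeriv_mul]
  simp only [mul_comm]

theorem sphereIntegral_mul_sphereLaplacian_eq {P : MvPolynomial (Fin 3) ℝ} {n : ℕ}
    (hP : P.totalDegree ≤ n) {f : C(Space3, ℝ)}
    (hf : ∀ w : MvPolynomial (Fin 3) ℝ, w.totalDegree ≤ n - 1 →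
      sphereIntegral (f * polyFun w) = 0) :
    sphereIntegral (f * polyFun (sphereLaplacian P)) =
      -(n * (n + 1)) * sphereIntegral (f * polyFun P) := by
  obtain ⟨Q, hQ, hPQ⟩ := exists_polyFun_sphereLaplacian_eq hP
  calc sphereIntegral (f * polyFun (sphereLaplacian P))
      = sphereIntegral (f * polyFun Q - (n * (n + 1) : ℝ) • (f * polyFun P)) := by
        refine sphereIntegral_congr fun u hu => ?_
        simp only [ContinuousMap.mul_apply, hPQ u hu, map_sub, map_mul,
          ContinuousMap.sub_apply, polyFun_C, ContinuousMap.smul_apply, smul_eq_mul]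
        ring
    _ = _ := by
        rw [map_sub, map_smul, hf Q hQ, smul_eq_mul]
        ring

theorem sphereIntegral_mul_sphereLaplacian_eq_zero {P : MvPolynomial (Fin 3) ℝ} {n : ℕ}
    (hP : P.totalDegree ≤ n) {f : C(Space3, ℝ)}
    (hf : ∀ w : MvPolynomial (Fin 3) ℝ, w.totalDegree ≤ n → sphereIntegral (f * polyFun w) = 0) :
    sphereIntegral (f * polyFun (sphereLaplacian P)) = 0 := by
  rw [sphereIntegral_mul_sphereLaplacian_eq hP fun w hw => hf w (hw.trans (Nat.sub_le n 1)),
    hf P hP, mul_zero]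

theorem polyFun_spectral_gap {n : ℕ} (hn : 1 ≤ n) {q : MvPolynomial (Fin 3) ℝ}
    (hq : q.totalDegree ≤ n)
    (hq1 : ∀ w : MvPolynomial (Fin 3) ℝ, w.totalDegree ≤ 1 →
      sphereIntegral (polyFun q * polyFun w) = 0) :
    6 * sphereIntegral (polyFun (q ^ 2)) ≤ -sphereIntegral (polyFun (q * sphereLaplacian q)) := by
  induction n, hn using Nat.le_induction generalizing q with
  | base =>
    rw [map_mul, sphereIntegral_mul_sphereLaplacian_eq_zero hq hq1, sq, map_mul, hq1 q hq]
    simp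
  | succ n hn ih =>
    obtain ⟨p, hp, hqp⟩ := exists_polyFun_projection n (polyFun q)
    rw [← map_sub] at hqp
    set h := q - p with hh
    have hhdeg : h.totalDegree ≤ n + 1 :=
      (MvPolynomial.totalDegree_sub _ _).trans (max_le hq (hp.trans (by omega)))
    have hp1 := ih hp fun w hw => by
      have h1 := hqp w (hw.trans hn)
      rw [hh, map_sub, sub_mul, map_sub, hq1 w hw] at h1
      linarith
    have hhL := sphereIntegral_mul_sphereLaplacian_eq hhdeg (f := polyFun h) hqp
    have hpL := sphereIntegral_mul_sphereLaplacian_eq_zero hp hqp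
    have hhp := hqp p hp
    have hcomm := sphereIntegral_mul_sphereLaplacian_comm p h
    simp only [← map_mul] at hhL hpL hhp
    have hqeq : q = p + h := by rw [hh]; ring
    have hsq : sphereIntegral (polyFun (q ^ 2)) =
        sphereIntegral (polyFun (p ^ 2)) + sphereIntegral (polyFun (h * h)) := by
      rw [hqeq, show (p + h) ^ 2 = p ^ 2 + h * h + (2 : ℝ) • (h * p) by
        rw [MvPolynomial.smul_eq_C_mul, map_ofNat]; ring]
      simp [-map_mul, hhp]
    have hL : sphereIntegral (polyFun (q * sphereLaplacian q)) =
        sphereIntegral (polyFun (p * sphereLaplacian p)) +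
          sphereIntegral (polyFun (h * sphereLaplacian h)) := by
      rw [hqeq, map_add sphereLaplacian, add_mul, mul_add, mul_add]
      simp only [map_add, hcomm, hpL]
      ring
    have hnn : 0 ≤ sphereIntegral (polyFun (h * h)) := by
      rw [← sq, map_pow]
      exact sphereIntegral_sq_nonneg _
    have hn' : (1 : ℝ) ≤ n := by exact_mod_cast hn
    rw [hsq, hL, hhL]
    push_cast
    nlinarith [mul_nonneg hnn (by nlinarith : (0 : ℝ) ≤ (n + 1) * (n + 1 + 1) - 6)]

theorem spectral_gap (f : C(Space3, ℝ)) (hf : ContDiff ℝ 1 f)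
    (hf1 : ∀ w : MvPolynomial (Fin 3) ℝ, w.totalDegree ≤ 1 →
      sphereIntegral (f * polyFun w) = 0) :
    6 * sphereIntegral (f ^ 2) ≤ ∑ k, sphereIntegral (axisDerivMap k f hf ^ 2) := by
  have key : ∀ ε > 0, 6 * sphereIntegral (f ^ 2) ≤
      ∑ k, sphereIntegral (axisDerivMap k f hf ^ 2) + ε ^ 2 * (6 * sphereIntegral 1) := by
    intro ε hε
    obtain ⟨p, hp⟩ := exists_polyFun_near f hε
    obtain ⟨q, hq, hfq⟩ := exists_polyFun_projection (max p.totalDegree 1) f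
    have hgap := polyFun_spectral_gap (le_max_right _ _) hq fun w hw => by
      have h1 := hfq w (hw.trans (le_max_right _ _))
      rw [sub_mul, map_sub, hf1 w hw] at h1
      linarith
    have hLq := sphereIntegral_mul_sphereLaplacian_eq_zero hq hfq
    rw [sub_mul, map_sub, ← map_mul] at hLq
    have hcross := sum_sphereIntegral_axisDerivMap_mul f hf q
    have hself := sum_sphereIntegral_axisPDeriv_mul q q
    have hbessel : 0 ≤ ∑ k, sphereIntegral (axisDerivMap k f hf ^ 2) -
        2 * ∑ k, sphereIntegral (axisDerivMap k f hf * polyFun (axisPDeriv k q)) +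
        ∑ k, sphereIntegral (polyFun (axisPDeriv k q * axisPDeriv k q)) := by
      rw [Finset.mul_sum, ← Finset.sum_sub_distrib, ← Finset.sum_add_distrib]
      refine Finset.sum_nonneg fun k _ => ?_
      refine (sphereIntegral_sq_nonneg
        (axisDerivMap k f hf - polyFun (axisPDeriv k q))).trans_eq ?_
      rw [← smul_eq_mul, ← map_smul, ← map_sub, ← map_add]
      congr 1
      ext u
      simp
      ring
    have hfqq := hfq q hq
    have hfqp := hfq (q - p) ((MvPolynomial.totalDegree_sub _ _).trans
      (max_le hq (le_max_left _ _)))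
    have hpyth : sphereIntegral (f ^ 2) =
        sphereIntegral (polyFun (q ^ 2)) + sphereIntegral ((f - polyFun q) ^ 2) := by
      have : f ^ 2 = polyFun (q ^ 2) + (f - polyFun q) ^ 2 +
          (2 : ℝ) • ((f - polyFun q) * polyFun q) := by
        ext u
        simp
        ring
      rw [this, map_add, map_add, map_smul, hfqq, smul_zero, add_zero]
    have hbest : sphereIntegral ((f - polyFun q) ^ 2) ≤ sphereIntegral ((f - polyFun p) ^ 2) := by
      have : (f - polyFun p) ^ 2 = (f - polyFun q) ^ 2 + (polyFun (q - p)) ^ 2 +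
          (2 : ℝ) • ((f - polyFun q) * polyFun (q - p)) := by
        ext u
        simp
        ring
      rw [this, map_add, map_add, map_smul, hfqp, smul_zero, add_zero]
      linarith [sphereIntegral_sq_nonneg (polyFun (q - p))]
    have happrox : sphereIntegral ((f - polyFun p) ^ 2) ≤ ε ^ 2 * sphereIntegral 1 := by
      rw [← smul_eq_mul, ← map_smul]
      refine sphereIntegral_mono fun u hu => ?_
      have := (sq_lt_sq₀ (abs_nonneg _) hε.le).2 (hp u hu)
      rw [sq_abs] at this
      simp
      linarith [sub_sq_comm (polyFun p u) (f u)]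
    linarith
  have hlim : Tendsto (fun ε : ℝ => ∑ k, sphereIntegral (axisDerivMap k f hf ^ 2) +
      ε ^ 2 * (6 * sphereIntegral 1)) (nhdsWithin 0 (Set.Ioi 0))
      (nhds (∑ k, sphereIntegral (axisDerivMap k f hf ^ 2))) := by
    refine tendsto_nhdsWithin_of_tendsto_nhds (Continuous.tendsto' (by fun_prop) _ _ (by simp))
  exact ge_of_tendsto hlim (eventually_mem_nhdsWithin.mono key)

/-- The linear form `u ↦ ⟪a, u⟫` as a polynomial. -/
def linearPoly (a : Space3) : MvPolynomial (Fin 3) ℝ :=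
  ∑ i, MvPolynomial.C (a i) * MvPolynomial.X i

theorem polyFun_linearPoly (a u : Space3) : polyFun (linearPoly a) u = ⟪a, u⟫ := by
  simp [linearPoly, PiLp.inner_apply, mul_comm]

theorem sphereLaplacian_linearPoly (a : Space3) :
    sphereLaplacian (linearPoly a) = -(2 : ℝ) • linearPoly a := by
  rw [linearPoly, map_sum, Finset.smul_sum]
  refine Finset.sum_congr rfl fun i _ => ?_
  rw [← MvPolynomial.smul_eq_C_mul, map_smul, smul_comm,
    sphereLaplacian_of_isHomogeneous (MvPolynomial.isHomogeneous_X ℝ i)]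
  have h2 : (MvPolynomial.C 2 : MvPolynomial (Fin 3) ℝ) = 2 := map_ofNat _ 2
  simp [MvPolynomial.pderiv_X, Pi.single_apply, apply_ite, MvPolynomial.smul_eq_C_mul, h2]
  norm_num

theorem totalDegree_linearPoly_le (a : Space3) : (linearPoly a).totalDegree ≤ 1 :=
  MvPolynomial.totalDegree_finsetSum_le fun i _ =>
    (MvPolynomial.totalDegree_mul _ _).trans (by simp)

theorem exists_eq_C_add_linearPoly {p : MvPolynomial (Fin 3) ℝ} (hp : p.totalDegree ≤ 1) :
    ∃ (c : ℝ) (a : Space3), p = MvPolynomial.C c + linearPoly a := by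
  have hhom := MvPolynomial.homogeneousComponent_isHomogeneous 1 p
  have hsum : MvPolynomial.homogeneousComponent 0 p + MvPolynomial.homogeneousComponent 1 p = p := by
    conv_rhs => rw [← MvPolynomial.sum_homogeneousComponent p]
    rw [Finset.sum_subset (Finset.range_mono (by omega : p.totalDegree + 1 ≤ 2)) fun k _ hk =>
      MvPolynomial.homogeneousComponent_eq_zero k p (by simpa using hk)]
    simp [Finset.sum_range_succ]
  have hconst (i : Fin 3) :=
    MvPolynomial.totalDegree_eq_zero_iff_eq_C.1 (Nat.le_zero.1 (hhom.pderiv (i := i)).totalDegree_le)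
  refine ⟨MvPolynomial.coeff 0 p, WithLp.toLp 2 fun i => MvPolynomial.coeff 0
    (MvPolynomial.pderiv i (MvPolynomial.homogeneousComponent 1 p)), ?_⟩
  conv_lhs => rw [← hsum, MvPolynomial.homogeneousComponent_zero,
    ← one_nsmul (MvPolynomial.homogeneousComponent 1 p), ← hhom.sum_X_mul_pderiv]
  rw [linearPoly]
  congr 1
  refine Finset.sum_congr rfl fun i _ => ?_
  rw [← hconst i, mul_comm]

theorem sphereIntegral_linearPoly (a : Space3) : sphereIntegral (polyFun (linearPoly a)) = 0 := by
  have h := sphereIntegral_mul_sphereLaplacian_comm 1 (linearPoly a)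
  have h1 : sphereLaplacian 1 = 0 := by simp [sphereLaplacian_apply]
  rw [h1, sphereLaplacian_linearPoly, one_mul, mul_zero, map_zero, map_zero, map_smul,
    map_smul, smul_eq_mul] at h
  linarith

theorem exists_linearPoly_projection (f : C(Space3, ℝ)) (hf : sphereIntegral f = 0) :
    ∃ a : Space3, ∀ w : MvPolynomial (Fin 3) ℝ, w.totalDegree ≤ 1 →
      sphereIntegral ((f - polyFun (linearPoly a)) * polyFun w) = 0 := by
  obtain ⟨p, hp, hfp⟩ := exists_polyFun_projection 1 f
  obtain ⟨c, a, rfl⟩ := exists_eq_C_add_linearPoly hp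
  refine ⟨a, fun w hw => ?_⟩
  have hc : sphereIntegral (polyFun (MvPolynomial.C c)) = 0 := by
    have h := hfp 1 (by simp)
    rw [map_one, mul_one, map_sub, hf, map_add, map_add, sphereIntegral_linearPoly] at h
    linarith
  have hc2 : sphereIntegral (polyFun (MvPolynomial.C c) ^ 2) = 0 := by
    have : polyFun (MvPolynomial.C c) ^ 2 = c • polyFun (MvPolynomial.C c) := by
      ext u
      simp [sq]
    rw [this, map_smul, hc, smul_zero]
  have h := hfp w hw
  rw [show f - polyFun (linearPoly a) = (f - polyFun (MvPolynomial.C c + linearPoly a)) +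
    polyFun (MvPolynomial.C c) by rw [map_add]; ring, add_mul, map_add, h,
    sphereIntegral_mul_eq_zero hc2, add_zero]

theorem sphereIntegral_deficit_ge (f : C(Space3, ℝ)) (hf : ContDiff ℝ 1 f) (a : Space3)
    (ha : ∀ w : MvPolynomial (Fin 3) ℝ, w.totalDegree ≤ 1 →
      sphereIntegral ((f - polyFun (linearPoly a)) * polyFun w) = 0) :
    4 * sphereIntegral ((f - polyFun (linearPoly a)) ^ 2) ≤
      ∑ k, sphereIntegral (axisDerivMap k f hf ^ 2) - 2 * sphereIntegral (f ^ 2) := by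
  have hL := sphereLaplacian_linearPoly a
  have hdeg := totalDegree_linearPoly_le a
  generalize linearPoly a = l at ha hL hdeg ⊢
  have hh : ContDiff ℝ 1 (f - polyFun l : C(Space3, ℝ)) := hf.sub (contDiff_polyFun l)
  have hgap := spectral_gap _ hh ha
  have hhl := ha l hdeg
  have hderiv (k : Fin 3) : axisDerivMap k f hf =
      axisDerivMap k _ hh + polyFun (axisPDeriv k l) := by
    have hsplit : ⇑f = ⇑(f - polyFun l) + ⇑(polyFun l) := by
      ext u
      simp
    ext u
    have h := congr_fun (axisDeriv_add k hh (contDiff_polyFun l)) u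
    rw [← hsplit, axisDeriv_polyFun] at h
    exact h
  have hcross := sum_sphereIntegral_axisDerivMap_mul _ hh l
  have hself := sum_sphereIntegral_axisPDeriv_mul l l
  rw [hL, map_smul, mul_smul_comm, map_smul, hhl,
    smul_zero, neg_zero] at hcross
  rw [hL, mul_smul_comm, map_smul, map_smul,
    smul_eq_mul] at hself
  have henergy : ∑ k, sphereIntegral (axisDerivMap k f hf ^ 2) =
      ∑ k, sphereIntegral (axisDerivMap k _ hh ^ 2) +
        2 * ∑ k, sphereIntegral (axisDerivMap k _ hh * polyFun (axisPDeriv k l)) +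
        ∑ k, sphereIntegral (polyFun (axisPDeriv k l * axisPDeriv k l)) := by
    rw [Finset.mul_sum, ← Finset.sum_add_distrib, ← Finset.sum_add_distrib]
    refine Finset.sum_congr rfl fun k _ => ?_
    rw [← smul_eq_mul, ← map_smul, ← map_add, ← map_add, hderiv k]
    congr 1
    ext u
    simp
    ring
  have hpyth : sphereIntegral (f ^ 2) =
      sphereIntegral ((f - polyFun l) ^ 2) + sphereIntegral (polyFun (l * l)) := by
    have : f ^ 2 = (f - polyFun l) ^ 2 + polyFun (l * l) +
        (2 : ℝ) • ((f - polyFun l) * polyFun l) := by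
      ext u
      simp
      ring
    rw [this, map_add, map_add, map_smul, hhl, smul_zero, add_zero]
  linarith

theorem sphere_stability_inequality (f : EuclideanSpace ℝ (Fin 3) → ℝ)
    (hf : ContDiff ℝ 1 f)
    (h0 : ∫ u in sphere (0 : EuclideanSpace ℝ (Fin 3)) 1, f u ∂(μH[2]) = 0) :
    (∫ u in sphere (0 : EuclideanSpace ℝ (Fin 3)) 1,
        (‖gradient f u - ⟪gradient f u, u⟫ • u‖ ^ 2 - 2 * f u ^ 2) ∂(μH[2])) ≥
      4 * ⨅ a : EuclideanSpace ℝ (Fin 3),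
        ∫ u in sphere (0 : EuclideanSpace ℝ (Fin 3)) 1, (f u - ⟪a, u⟫) ^ 2 ∂(μH[2]) := by
  let F : C(Space3, ℝ) := ⟨f, hf.continuous⟩
  obtain ⟨a, ha⟩ := exists_linearPoly_projection F h0
  have hmain := sphereIntegral_deficit_ge F hf a ha
  have hleft : ∫ u in sphere (0 : EuclideanSpace ℝ (Fin 3)) 1,
      (‖gradient f u - ⟪gradient f u, u⟫ • u‖ ^ 2 - 2 * f u ^ 2) ∂(μH[2]) =
      ∑ k, sphereIntegral (axisDerivMap k F hf ^ 2) - 2 * sphereIntegral (F ^ 2) := by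
    rw [← smul_eq_mul, ← map_smul, ← map_sum, ← map_sub]
    refine integral_congr_ae (ae_mem_sphere.mono fun u hu => ?_)
    simp only [norm_sq_tangential_gradient hu]
    simp [axisDerivMap, F]
  have hright : ∫ u in sphere (0 : EuclideanSpace ℝ (Fin 3)) 1, (f u - ⟪a, u⟫) ^ 2 ∂(μH[2]) =
      sphereIntegral ((F - polyFun (linearPoly a)) ^ 2) := by
    refine integral_congr_ae (Eventually.of_forall fun u => ?_)
    simp [polyFun_linearPoly, F]
  have hinf : ⨅ a : EuclideanSpace ℝ (Fin 3),
      ∫ u in sphere (0 : EuclideanSpace ℝ (Fin 3)) 1, (f u - ⟪a, u⟫) ^ 2 ∂(μH[2]) ≤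
      ∫ u in sphere (0 : EuclideanSpace ℝ (Fin 3)) 1, (f u - ⟪a, u⟫) ^ 2 ∂(μH[2]) :=
    ciInf_le ⟨0, by
      rintro _ ⟨b, rfl⟩
      exact integral_nonneg fun u => sq_nonneg _⟩ a
  rw [hleft]
  linarith
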